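/- Suppose U_1, …, U_n are unitary operators on E and P_1, …, P_n are orthogonal projections on E satisfying: (a) U_i U_j = U_j U_i for all i, j; (b) U_1⋯U_n = I_E; (c) P_i + U_i* P_j U_i = P_j + U_j* P_i U_j ≤ I_E for all i ≠ j; and (d) P_1 + U_1* P_2 U_1 + U_1* U_2* P_3 U_2 U_1 + ⋯ + U_1*⋯U_{n−1}* P_n U_{n−1}⋯U_1 = I_E. For each i let M_i be the bounded operator on ℓ²(ℕ, E) determined by (M_i f)(0) = U_i((I − P_i) f(0)) and (M_i f)(m+1) = U_i((I − P_i) f(m+1)) + U_i(P_i f(m)) for all m ∈ ℕ. Then each M_i is an isometry, M_i M_j = M_j M_i for all i, j, and the product M_1 M_2 ⋯ M_n equals the unilateral shift S on ℓ²(ℕ, E), i.e., (S f)(0) = 0 and (S f)(m+1) = f(m). (In other words, a model n-isometry is an n-isometry: the isometric symbols Φ_i(z) = U_i(P_i^⊥ + z P_i) multiply to z I_E.) -/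

import Mathlib

open ContinuousLinearMap

/-- The product `U_{k-1} * ⋯ * U_0` of the unitaries with index `< k`
(so that `prefixProd U k` acts as `U_{k-1} ⋯ U_1` in 1-based notation). -/
noncomputable def prefixProd {E : Type*} [NormedAddCommGroup E] [InnerProductSpace ℂ E]
    {n : ℕ} (U : Fin n → E →L[ℂ] E) (k : Fin n) : E →L[ℂ] E :=
  ((((List.finRange n).filter (fun i => i < k)).reverse).map U).prod

section aux
variable {E : Type*} [NormedAddCommGroup E] [InnerProductSpace ℂ E]

/-- `M` acts as multiplication by the symbol `A + z B`. -/
def HasSym (M : lp (fun _ : ℕ => E) 2 →L[ℂ] lp (fun _ : ℕ => E) 2) (A B : E →L[ℂ] E) : Prop :=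
  ∀ f : lp (fun _ : ℕ => E) 2, M f 0 = A (f 0) ∧ ∀ m : ℕ, M f (m + 1) = A (f (m + 1)) + B (f m)

theorem HasSym.mul {M N : lp (fun _ : ℕ => E) 2 →L[ℂ] lp (fun _ : ℕ => E) 2}
    {A B C D : E →L[ℂ] E} (h : HasSym M A B) (k : HasSym N C D) (hz : B * D = 0) :
    HasSym (M * N) (A * C) (A * D + B * C) := by
  intro f
  refine ⟨?_, ?_⟩
  · simp [(h (N f)).1, (k f).1]
  · intro m
    have h1 : (M * N) f (m+1) = A (N f (m+1)) + B (N f m) := (h (N f)).2 m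
    rw [h1, (k f).2 m]
    cases m with
    | zero => rw [(k f).1]; simp [add_assoc]
    | succ m =>
      rw [(k f).2 m]
      have : B (D (f m)) = 0 := by
        have := congrArg (fun T : E →L[ℂ] E => T (f m)) hz
        simpa using this
      simp [this, add_assoc]

theorem HasSym.ext {M N : lp (fun _ : ℕ => E) 2 →L[ℂ] lp (fun _ : ℕ => E) 2}
    {A B : E →L[ℂ] E} (h : HasSym M A B) (k : HasSym N A B) : M = N := by
  ext f m
  cases m with
  | zero => rw [(h f).1, (k f).1]
  | succ m => rw [(h f).2, (k f).2]

theorem sq_decomp {P : E →L[ℂ] E} [CompleteSpace E] (hP : IsSelfAdjoint P) (hPP : P * P = P)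
    (x y : E) : ‖(1 - P) x + P y‖ ^ 2 = ‖(1 - P) x‖ ^ 2 + ‖P y‖ ^ 2 := by
  have h0 : inner ℂ ((1 - P) x) (P y) = 0 := by
    have h1 : P ((1 - P) x) = 0 := by
      have := congrArg (fun T : E →L[ℂ] E => T x) hPP
      simp only [mul_apply_eq_comp] at this
      simp [this]
    rw [← ContinuousLinearMap.adjoint_inner_left, hP.adjoint_eq, h1, inner_zero_left]
  have := norm_add_sq_eq_norm_sq_add_norm_sq_of_inner_eq_zero _ _ h0
  simpa [sq] using this

theorem unit_norm {U : E →L[ℂ] E} [CompleteSpace E]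
    (h : ContinuousLinearMap.adjoint U * U = 1) (x : E) : ‖U x‖ = ‖x‖ :=
  (ContinuousLinearMap.norm_map_iff_adjoint_comp_self U).2 h x

theorem lp_sq (f : lp (fun _ : ℕ => E) 2) : HasSum (fun m => ‖f m‖ ^ 2) (‖f‖ ^ 2) := by
  have := lp.hasSum_norm (p := 2) (by norm_num) f
  simpa using this

theorem sym_isom [CompleteSpace E] {M : lp (fun _ : ℕ => E) 2 →L[ℂ] lp (fun _ : ℕ => E) 2}
    {U P : E →L[ℂ] E} (hU : ContinuousLinearMap.adjoint U * U = 1)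
    (hP : IsSelfAdjoint P) (hPP : P * P = P)
    (h : HasSym M (U * (1 - P)) (U * P)) (f : lp (fun _ : ℕ => E) 2) : ‖M f‖ = ‖f‖ := by
  have hf := lp_sq f
  have e0 : ‖M f 0‖ ^ 2 = ‖(1 - P) (f 0)‖ ^ 2 := by
    rw [(h f).1, mul_apply_eq_comp, unit_norm hU]
  have e1 : ∀ m, ‖M f (m+1)‖ ^ 2 = ‖(1 - P) (f (m+1))‖ ^ 2 + ‖P (f m)‖ ^ 2 := by
    intro m
    rw [(h f).2, mul_apply_eq_comp, mul_apply_eq_comp, ← map_add,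
      unit_norm hU, sq_decomp hP hPP]
  have e2 : ∀ m, ‖f m‖ ^ 2 = ‖(1 - P) (f m)‖ ^ 2 + ‖P (f m)‖ ^ 2 := by
    intro m
    rw [← sq_decomp hP hPP]; simp
  have s1 : Summable (fun m => ‖(1 - P) (f m)‖ ^ 2) :=
    Summable.of_nonneg_of_le (fun _ => by positivity)
      (fun m => by rw [e2 m]; exact le_add_of_nonneg_right (by positivity)) hf.summable
  have s2 : Summable (fun m => ‖P (f m)‖ ^ 2) :=
    Summable.of_nonneg_of_le (fun _ => by positivity)
      (fun m => by rw [e2 m]; exact le_add_of_nonneg_left (by positivity)) hf.summable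
  have k : ‖M f‖ ^ 2 = ‖f‖ ^ 2 := by
    rw [← (lp_sq (M f)).tsum_eq, ← hf.tsum_eq, (lp_sq (M f)).summable.tsum_eq_zero_add, e0]
    simp_rw [e1, e2]
    rw [Summable.tsum_add ((summable_nat_add_iff 1).2 s1) s2, Summable.tsum_add s1 s2,
      s1.tsum_eq_zero_add, add_assoc]
  exact (sq_eq_sq₀ (norm_nonneg _) (norm_nonneg _)).1 k

theorem orth_of_le [CompleteSpace E] {A B : E →L[ℂ] E} (hA : IsSelfAdjoint A) (hAA : A * A = A)
    (hB : IsSelfAdjoint B) (hBB : B * B = B) (h : (1 - (A + B)).IsPositive) : B * A = 0 := by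
  ext x
  have h1 := h.re_inner_nonneg_left (A x)
  have a1 : A (A x) = A x := congrArg (fun T : E →L[ℂ] E => T x) hAA
  have b1 : B (B (A x)) = B (A x) := congrArg (fun T : E →L[ℂ] E => T (A x)) hBB
  have h2 : (1 - (A + B)) (A x) = - B (A x) := by simp [a1]
  have h3 : inner ℂ (B (A x)) (A x) = inner ℂ (B (A x)) (B (A x)) := by
    conv_rhs => rw [← ContinuousLinearMap.adjoint_inner_left, hB.adjoint_eq, b1]
  rw [h2, inner_neg_left, h3, map_neg, inner_self_eq_norm_sq] at h1
  have : ‖B (A x)‖ = 0 := by nlinarith [norm_nonneg (B (A x))]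
  simpa using this

theorem proj_pos [CompleteSpace E] {A : E →L[ℂ] E} (hA : IsSelfAdjoint A) (hAA : A * A = A) :
    A.IsPositive := by
  have := ContinuousLinearMap.isPositive_adjoint_comp_self A
  rw [hA.adjoint_eq] at this
  change (A * A).IsPositive at this
  rwa [hAA] at this

theorem conj_proj [CompleteSpace E] {V P : E →L[ℂ] E}
    (h2 : V * ContinuousLinearMap.adjoint V = 1) (hP : IsSelfAdjoint P) (hPP : P * P = P) :
    IsSelfAdjoint (ContinuousLinearMap.adjoint V * (P * V)) ∧
    (ContinuousLinearMap.adjoint V * (P * V)) * (ContinuousLinearMap.adjoint V * (P * V)) =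
      ContinuousLinearMap.adjoint V * (P * V) := by
  rw [← ContinuousLinearMap.star_eq_adjoint] at *
  constructor
  · rw [← mul_assoc]; exact hP.conjugate' V
  · calc _ = star V * (P * ((V * star V) * (P * V))) := by simp only [mul_assoc]
      _ = star V * ((P * P) * V) := by rw [h2]; simp only [mul_assoc, one_mul]
      _ = _ := by rw [hPP]

theorem orth_family [CompleteSpace E] {ι : Type*} [Fintype ι] [DecidableEq ι] (R : ι → E →L[ℂ] E)
    (hR : ∀ i, IsSelfAdjoint (R i) ∧ R i * R i = R i) (hs : ∑ i, R i = 1) {i j : ι} (hij : i ≠ j) :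
    R i * R j = 0 := by
  refine orth_of_le (hR j).1 (hR j).2 (hR i).1 (hR i).2 ?_
  have : 1 - (R j + R i) = ∑ k ∈ (Finset.univ.erase j).erase i, R k := by
    rw [← hs, ← Finset.add_sum_erase Finset.univ R (Finset.mem_univ j),
      ← Finset.add_sum_erase (Finset.univ.erase j) R (a := i) (by simp [hij])]
    abel
  rw [this]
  refine Finset.sum_induction _ ContinuousLinearMap.IsPositive (fun a b ha hb => ha.add hb)
    ContinuousLinearMap.isPositive_zero (fun k _ => proj_pos (hR k).1 (hR k).2)

theorem filter_lt_eq_take (n k : ℕ) :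
    (List.finRange n).filter (fun i => decide (i.val < k)) = (List.finRange n).take k := by
  conv_lhs => rw [← List.take_append_drop k (List.finRange n)]
  rw [List.filter_append]
  have h1 : ((List.finRange n).take k).filter (fun i => decide (i.val < k)) =
      (List.finRange n).take k := by
    rw [List.filter_eq_self]
    intro a ha
    obtain ⟨m, hm, rfl⟩ := List.mem_take_iff_getElem.1 ha
    simp at hm ⊢
    omega
  have h2 : ((List.finRange n).drop k).filter (fun i => decide (i.val < k)) = [] := by
    rw [List.filter_eq_nil_iff]
    intro a ha
    obtain ⟨m, hm, rfl⟩ := List.mem_drop_iff_getElem.1 ha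
    simp
  rw [h1, h2, List.append_nil]

/-- Reversed partial products. -/
noncomputable def rp {A : Type*} [Monoid A] {n : ℕ} (U : Fin n → A) (k : ℕ) : A :=
  ((((List.finRange n).take k).reverse).map U).prod

theorem rp_zero {A : Type*} [Monoid A] {n : ℕ} (U : Fin n → A) : rp U 0 = 1 := by simp [rp]

theorem rp_succ {A : Type*} [Monoid A] {n : ℕ} (U : Fin n → A) (k : ℕ) (hk : k < n) :
    rp U (k+1) = U ⟨k, hk⟩ * rp U k := by
  unfold rp
  rw [List.take_succ_eq_append_getElem (by simpa using hk)]
  simp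

theorem rp_last {A : Type*} [Monoid A] {n : ℕ} (U : Fin n → A) (hc : ∀ i j, Commute (U i) (U j)) :
    rp U n = (List.ofFn U).prod := by
  unfold rp
  rw [List.ofFn_eq_map, List.take_of_length_le (by simp)]
  apply List.Perm.prod_eq'
  · exact (List.reverse_perm _).map U
  · rw [List.pairwise_map]
    exact List.pairwise_of_forall (fun {x y} => hc x y)

theorem prefixProd_eq {n : ℕ} (U : Fin n → E →L[ℂ] E) (k : Fin n) :
    prefixProd U k = rp U k.val := by
  unfold prefixProd rp
  rw [← filter_lt_eq_take]
  rfl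
end aux

/-- A model `n`-isometry is an `n`-isometry: if `U_1,…,U_n` are commuting unitaries with
`U_1⋯U_n = I` and `P_1,…,P_n` are orthogonal projections satisfying the
Berger–Coburn–Lebow/Bercovici–Douglas–Foias conditions, then the multiplication operators
`M_i = M_{Φ_i}` with `Φ_i(z) = U_i(P_i^⊥ + z P_i)` on `H²_E(𝔻) ≅ ℓ²(ℕ, E)` are commuting
isometries whose product is the unilateral shift. -/
theorem stmt11 {E : Type*} [NormedAddCommGroup E] [InnerProductSpace ℂ E] [CompleteSpace E]
    {n : ℕ} (hn : 2 ≤ n)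
    (U P : Fin n → E →L[ℂ] E)
    (hU : ∀ i, ContinuousLinearMap.adjoint (U i) * U i = 1 ∧
      U i * ContinuousLinearMap.adjoint (U i) = 1)
    (hP : ∀ i, IsSelfAdjoint (P i) ∧ P i * P i = P i)
    (ha : ∀ i j, Commute (U i) (U j))
    (hb : (List.ofFn U).prod = 1)
    (hc : ∀ i j, i ≠ j →
      (P i + ContinuousLinearMap.adjoint (U i) * (P j * U i)
          = P j + ContinuousLinearMap.adjoint (U j) * (P i * U j)) ∧
      (1 - (P i + ContinuousLinearMap.adjoint (U i) * (P j * U i))).IsPositive)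
    (hd : ∑ j : Fin n,
        ContinuousLinearMap.adjoint (prefixProd U j) * (P j * prefixProd U j) = 1)
    (M : Fin n → (lp (fun _ : ℕ => E) 2 →L[ℂ] lp (fun _ : ℕ => E) 2))
    (hM : ∀ (i : Fin n) (f : lp (fun _ : ℕ => E) 2),
      M i f 0 = U i ((1 - P i) (f 0)) ∧
      ∀ m : ℕ, M i f (m + 1) = U i ((1 - P i) (f (m + 1))) + U i (P i (f m))) :
    (∀ (i : Fin n) (f : lp (fun _ : ℕ => E) 2), ‖M i f‖ = ‖f‖) ∧
    (∀ i j, Commute (M i) (M j)) ∧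
    (∀ f : lp (fun _ : ℕ => E) 2,
      (List.ofFn M).prod f 0 = 0 ∧ ∀ m : ℕ, (List.ofFn M).prod f (m + 1) = f m) := by
  have hS : ∀ i, HasSym (M i) (U i * (1 - P i)) (U i * P i) := fun i f =>
    ⟨(hM i f).1, (hM i f).2⟩
  have key : ∀ i j, i ≠ j → HasSym (M i * M j)
      (U i * U j * (1 - (P j + ContinuousLinearMap.adjoint (U j) * (P i * U j))))
      (U i * U j * (P j + ContinuousLinearMap.adjoint (U j) * (P i * U j))) := by
    intro i j hij
    obtain ⟨q1, q2⟩ := conj_proj (hU j).2 (hP i).1 (hP i).2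
    have ho := orth_of_le (hP j).1 (hP j).2 q1 q2 (hc j i hij.symm).2
    have hPU : P i * U j = U j * (ContinuousLinearMap.adjoint (U j) * (P i * U j)) := by
      rw [← mul_assoc, (hU j).2, one_mul]
    generalize ContinuousLinearMap.adjoint (U j) * (P i * U j) = Q at *
    have hz : U i * P i * (U j * P j) = 0 := by
      rw [mul_assoc, ← mul_assoc (P i), hPU, mul_assoc (U j), ho]; simp
    have := (hS i).mul (hS j) hz
    have e : (1 - P i) * U j = U j * (1 - Q) := by rw [sub_mul, hPU]; noncomm_ring
    convert this using 1
    · rw [mul_assoc (U i) (1 - P i), ← mul_assoc (1 - P i), e, mul_assoc (U j) (1 - Q),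
        show (1 - Q) * (1 - P j) = 1 - (P j + Q) + Q * P j by noncomm_ring, ho]
      noncomm_ring
    · rw [mul_assoc (U i) (1 - P i), ← mul_assoc (1 - P i), e, mul_assoc (U j) (1 - Q),
        mul_assoc (U i) (P i), ← mul_assoc (P i), hPU, mul_assoc (U j) Q,
        sub_mul, mul_sub Q, ho]
      noncomm_ring
  have hcomm : ∀ i j, Commute (M i) (M j) := by
    intro i j
    rcases eq_or_ne i j with rfl | hij
    · exact Commute.refl _
    · have h1 := key i j hij
      have h2 := key j i hij.symm
      rw [(hc i j hij).1, (ha j i).eq] at h2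
      exact h1.ext h2
  refine ⟨fun i f => sym_isom (hU i).1 (hP i).1 (hP i).2 (hS i) f, hcomm, ?_⟩
  have hV : ∀ k, rp U k ∈ unitary (E →L[ℂ] E) := by
    intro k
    apply Submonoid.list_prod_mem
    intro x hx
    obtain ⟨i, -, rfl⟩ := List.mem_map.1 hx
    exact ⟨(hU i).1, (hU i).2⟩
  simp_rw [prefixProd_eq] at hd
  have hV2 : ∀ k, rp U k * ContinuousLinearMap.adjoint (rp U k) = 1 := fun k => (hV k).2
  set R : Fin n → E →L[ℂ] E := fun j =>
    ContinuousLinearMap.adjoint (rp U j) * (P j * rp U j) with hRdef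
  have hR : ∀ i, IsSelfAdjoint (R i) ∧ R i * R i = R i := fun i =>
    conj_proj (hV2 i) (hP i).1 (hP i).2
  have hN : ∀ k, k ≤ n → HasSym (rp M k)
      (rp U k * (1 - ∑ j with j.val < k, R j)) (rp U k * ∑ j with j.val < k, R j) := by
    intro k
    induction k with
    | zero => intro _ f; simp [rp_zero]
    | succ k ih =>
      intro hk
      have ih := ih (by omega)
      have hT : ∑ j with j.val < k + 1, R j = R ⟨k, hk⟩ + ∑ j with j.val < k, R j := by
        rw [← Finset.sum_insert (by simp)]
        congr 1
        ext j
        simp [Fin.ext_iff]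
        omega
      have ho : R ⟨k, hk⟩ * ∑ j with j.val < k, R j = 0 := by
        rw [Finset.mul_sum]
        refine Finset.sum_eq_zero fun j hj => orth_family R hR hd ?_
        rintro rfl
        simp at hj
      have hPU : P ⟨k, hk⟩ * rp U k = rp U k * R ⟨k, hk⟩ := by
        simp only [hRdef]
        rw [← mul_assoc, hV2, one_mul]
      rw [rp_succ M k hk, rp_succ U k hk, hT]
      generalize (∑ j with j.val < k, R j) = T at *
      generalize R ⟨k, hk⟩ = Q at *
      generalize rp U k = V at *
      have hz : U ⟨k, hk⟩ * P ⟨k, hk⟩ * (V * T) = 0 := by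
        rw [mul_assoc, ← mul_assoc (P _), hPU, mul_assoc V, ho]; simp
      have := (hS ⟨k, hk⟩).mul ih hz
      have e : (1 - P ⟨k, hk⟩) * V = V * (1 - Q) := by rw [sub_mul, hPU]; noncomm_ring
      convert this using 1
      · rw [mul_assoc (U _) (1 - P _), ← mul_assoc (1 - P _), e, mul_assoc V (1 - Q),
          show (1 - Q) * (1 - T) = 1 - (Q + T) + Q * T by noncomm_ring, ho]
        noncomm_ring
      · rw [mul_assoc (U _) (1 - P _), ← mul_assoc (1 - P _), e, mul_assoc V (1 - Q),
          mul_assoc (U _) (P _), ← mul_assoc (P _), hPU, mul_assoc V Q,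
          sub_mul, mul_sub Q, ho]
        noncomm_ring
  have hfin := hN n le_rfl
  rw [rp_last U ha, hb, rp_last M hcomm] at hfin
  have hT : ∑ j : Fin n with j.val < n, R j = 1 := by
    rw [← hd]; congr 1; ext j; simp
  rw [hT] at hfin
  intro f
  have := hfin f
  simpa using this
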